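/- Let f : X₁ → X₂ be an (L,A)-quasi-isometry between CAT(0) spaces, let p ∈ X₁, and let ξ, η ∈ ∂_∞X₁. Suppose h(ξ), h(η) ∈ ∂_∞X₂ are points such that the sequences f(γ_{pξ}(i)) and f(γ_{pη}(i)) (i ∈ ℕ) Tits converge to h(ξ) and h(η) respectively. Then sin(d_T(h(ξ), h(η))/1) ≤ 2L²·sin(d_T(ξ,η)/2), provided d_T(h(ξ),h(η)) ≤ π; in particular, if d_T(ξ,η) ≤ μ/L² for a constant μ chosen so that t/λ ≤ sin t ≤ t for 0 < t with sin t ≤ μ, then d_T(h(ξ), h(η)) ≤ λL²·d_T(ξ,η). -/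

import Mathlib

open Metric Set Filter MeasureTheory

noncomputable def compAngle {X : Type*} [MetricSpace X] (p a b : X) : ℝ :=
  Real.arccos ((dist p a ^ 2 + dist p b ^ 2 - dist a b ^ 2) / (2 * dist p a * dist p b))

def IsGeodesicSegment {X : Type*} [MetricSpace X] (f : ℝ → X) (x y : X) : Prop :=
  f 0 = x ∧ f (dist x y) = y ∧
    ∀ s ∈ Set.Icc (0 : ℝ) (dist x y), ∀ t ∈ Set.Icc (0 : ℝ) (dist x y),
      dist (f s) (f t) = |s - t|

def IsGeodesicRay {X : Type*} [MetricSpace X] (c : ℝ → X) : Prop :=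
  ∀ s ∈ Set.Ici (0 : ℝ), ∀ t ∈ Set.Ici (0 : ℝ), dist (c s) (c t) = |s - t|

/-- CAT(0): a complete geodesic space satisfying the CN (Bruhat–Tits) comparison
inequality for midpoints, which is equivalent to the triangle comparison property. -/
def IsCAT0 (X : Type*) [MetricSpace X] : Prop :=
  (∀ x y : X, ∃ f : ℝ → X, IsGeodesicSegment f x y) ∧
  ∀ x y z m : X, dist y m = dist y z / 2 → dist z m = dist y z / 2 →
    dist x m ^ 2 ≤ dist x y ^ 2 / 2 + dist x z ^ 2 / 2 - dist y z ^ 2 / 4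

/-- `a` lies on the (unique, in a CAT(0) space) geodesic segment from `p` to `x`. -/
def MetricBetween {X : Type*} [MetricSpace X] (p a x : X) : Prop :=
  dist p a + dist a x = dist p x

/-- The Alexandrov angle at `p` between the segments `px` and `py`; in a CAT(0) space
the comparison angles are monotone, so the limit equals the infimum. -/
noncomputable def alexAngle {X : Type*} [MetricSpace X] (p x y : X) : ℝ :=
  sInf {θ : ℝ | ∃ a b : X, MetricBetween p a x ∧ MetricBetween p b y ∧
    a ≠ p ∧ b ≠ p ∧ θ = compAngle p a b}

def ConvexSubset {X : Type*} [MetricSpace X] (A : Set X) : Prop :=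
  ∀ x ∈ A, ∀ y ∈ A, ∀ f : ℝ → X, IsGeodesicSegment f x y →
    ∀ t ∈ Set.Icc (0 : ℝ) (dist x y), f t ∈ A

/-!
Comparison angles at the common origin of two geodesic rays are monotone, hence
`dist (c r) (c' r) ≤ dist (c s) (c' t)` whenever `r ≤ s` and `r ≤ t`. Pick points `c₁ (sᵢ)` and
`c₂ (tᵢ)` within `o(i)` of `f (γ₁ i)` and `f (γ₂ i)`. By the quasi-isometry inequalities, `sᵢ` and
`tᵢ` eventually exceed `a i` for every `a < 1 / L`, while
`dist (c₁ sᵢ) (c₂ tᵢ) ≤ L * dist (γ₁ i) (γ₂ i) + o(i)`.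
Dividing by `i`, and using that two rays at Tits angle `θ` separate at speed `2 sin (θ / 2)`, gives
`sin (β / 2) ≤ L² sin (α / 2)`, from which both estimates follow.
-/

open Asymptotics
open scoped Topology Real

theorem nonpos_of_continuousOn_of_midpoint_le {h : ℝ → ℝ} {a b : ℝ}
    (hc : ContinuousOn h (Icc a b)) (ha : h a ≤ 0) (hb : h b ≤ 0)
    (hmid : ∀ u ∈ Icc a b, ∀ v ∈ Icc a b, h ((u + v) / 2) ≤ (h u + h v) / 2)
    {t : ℝ} (ht : t ∈ Icc a b) : h t ≤ 0 := by
  obtain ⟨x, ⟨hax, hxb⟩, hmax⟩ := isCompact_Icc.exists_isMaxOn ⟨t, ht⟩ hc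
  refine (hmax ht).trans ?_
  have hab : a ≤ b := hax.trans hxb
  -- The maximum point is the midpoint of an endpoint and another point of the interval.
  obtain ⟨u, hu, v, hv, huv, hu0⟩ :
      ∃ u ∈ Icc a b, ∃ v ∈ Icc a b, (u + v) / 2 = x ∧ h u ≤ 0 := by
    rcases le_total x ((a + b) / 2) with hx | hx
    · exact ⟨a, left_mem_Icc.2 hab, 2 * x - a, ⟨by linarith, by linarith⟩, by ring, ha⟩
    · exact ⟨b, right_mem_Icc.2 hab, 2 * x - b, ⟨by linarith, by linarith⟩, by ring, hb⟩
  have hx : h x ≤ (h u + h v) / 2 := huv ▸ hmid u hu v hv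
  have hvx : h v ≤ h x := hmax hv
  linarith

theorem convexOn_of_continuousOn_of_midpoint_le {E : Type*} [AddCommGroup E] [Module ℝ E]
    [TopologicalSpace E] [IsTopologicalAddGroup E] [ContinuousSMul ℝ E] {s : Set E} {f : E → ℝ}
    (hs : Convex ℝ s) (hf : ContinuousOn f s)
    (hmid : ∀ x ∈ s, ∀ y ∈ s, f (midpoint ℝ x y) ≤ (f x + f y) / 2) :
    ConvexOn ℝ s f := by
  refine ⟨hs, fun x hx y hy a b ha hb hab => ?_⟩
  have hmaps : MapsTo (AffineMap.lineMap x y) (Icc (0 : ℝ) 1) s := hs.mapsTo_lineMap hx hy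
  have hcont : ContinuousOn
      (fun t : ℝ => f (AffineMap.lineMap x y t) - AffineMap.lineMap (f x) (f y) t) (Icc 0 1) :=
    (hf.comp AffineMap.lineMap_continuous.continuousOn hmaps).sub
      AffineMap.lineMap_continuous.continuousOn
  have hchord := nonpos_of_continuousOn_of_midpoint_le hcont (by simp) (by simp)
    (fun u hu v hv => by
      have h := hmid _ (hmaps hu) _ (hmaps hv)
      have huv : (u + v) / 2 = midpoint ℝ u v := by
        rw [midpoint_eq_smul_add, smul_eq_mul, invOf_eq_inv, div_eq_inv_mul]
      rw [← AffineMap.map_midpoint, ← huv] at h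
      simp only [AffineMap.lineMap_apply_ring'] at h ⊢
      linarith)
    (t := b) ⟨hb, by linarith⟩
  obtain rfl : a = 1 - b := by linarith
  simpa [AffineMap.lineMap_apply_module] using hchord

section ComparisonAngle

variable {X : Type*} [MetricSpace X] (p a b : X)

theorem compAngle_nonneg : 0 ≤ compAngle p a b :=
  Real.arccos_nonneg _

theorem compAngle_le_pi : compAngle p a b ≤ π :=
  Real.arccos_le_pi _

theorem dist_sq_eq_sub_mul_cos_compAngle :
    dist a b ^ 2 =
      dist p a ^ 2 + dist p b ^ 2 - 2 * dist p a * dist p b * Real.cos (compAngle p a b) := by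
  rcases eq_or_ne p a with rfl | hpa
  · simp
  rcases eq_or_ne p b with rfl | hpb
  · simp [dist_comm]
  have ha : 0 < dist p a := dist_pos.2 hpa
  have hb : 0 < dist p b := dist_pos.2 hpb
  have hupper : dist a b ≤ dist p a + dist p b := dist_triangle_left a b p
  have hlower : |dist p a - dist p b| ≤ dist a b := by
    simpa only [dist_comm p] using abs_dist_sub_le a b p
  have hupper_sq : dist a b ^ 2 ≤ (dist p a + dist p b) ^ 2 := by gcongr
  have hlower_sq : (dist p a - dist p b) ^ 2 ≤ dist a b ^ 2 :=
    sq_le_sq.2 (hlower.trans (le_abs_self _))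
  rw [compAngle, Real.cos_arccos]
  · field_simp
    ring
  · rw [le_div_iff₀ (by positivity)]
    linarith
  · rw [div_le_one (by positivity)]
    linarith

variable {p a b}

theorem dist_eq_mul_sin_half_compAngle {t : ℝ} (ha : dist p a = t) (hb : dist p b = t) :
    dist a b = t * (2 * Real.sin (compAngle p a b / 2)) := by
  have ht : 0 ≤ t := ha ▸ dist_nonneg
  have hsin : 0 ≤ Real.sin (compAngle p a b / 2) :=
    Real.sin_nonneg_of_nonneg_of_le_pi (by linarith [compAngle_nonneg p a b])
      (by linarith [compAngle_le_pi p a b, Real.pi_pos])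
  have hcos : Real.cos (compAngle p a b) = 1 - 2 * Real.sin (compAngle p a b / 2) ^ 2 := by
    rw [Real.sin_sq_eq_half_sub, mul_div_cancel₀ _ two_ne_zero]
    ring
  refine (sq_eq_sq₀ dist_nonneg (by positivity)).1 ?_
  rw [dist_sq_eq_sub_mul_cos_compAngle p a b, ha, hb, hcos]
  ring

end ComparisonAngle

/-- The Bruhat–Tits (CN) inequality: the half of the CAT(0) condition that compares the distance
to a midpoint with the length of a Euclidean median. -/
def BruhatTitsInequality (X : Type*) [MetricSpace X] : Prop :=
  ∀ x y z m : X, dist y m = dist y z / 2 → dist z m = dist y z / 2 →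
    dist x m ^ 2 ≤ dist x y ^ 2 / 2 + dist x z ^ 2 / 2 - dist y z ^ 2 / 4

/-- `c` and `c'`, thought of as geodesic rays from `p`, make Tits angle `θ` at infinity: `θ` is the
limit of their comparison angles at `p`. -/
def HasTitsAngle {X : Type*} [MetricSpace X] (p : X) (c c' : ℝ → X) (θ : ℝ) : Prop :=
  Tendsto (fun t => compAngle p (c t) (c' t)) atTop (𝓝 θ)

namespace HasTitsAngle

variable {X : Type*} [MetricSpace X] {p : X} {c c' : ℝ → X} {θ : ℝ}

theorem nonneg (h : HasTitsAngle p c c' θ) : 0 ≤ θ :=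
  ge_of_tendsto' h fun _ => compAngle_nonneg _ _ _

theorem le_pi (h : HasTitsAngle p c c' θ) : θ ≤ π :=
  le_of_tendsto' h fun _ => compAngle_le_pi _ _ _

end HasTitsAngle

namespace IsGeodesicRay

variable {X : Type*} [MetricSpace X] {c c' : ℝ → X}

theorem dist_zero_left (hc : IsGeodesicRay c) {t : ℝ} (ht : 0 ≤ t) : dist (c 0) (c t) = t := by
  rw [hc 0 self_mem_Ici t ht, zero_sub, abs_neg, abs_of_nonneg ht]

theorem continuousOn (hc : IsGeodesicRay c) : ContinuousOn c (Ici 0) :=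
  (LipschitzOnWith.of_dist_le_mul (K := 1) fun s hs t ht => by
    rw [hc s hs t ht, Real.dist_eq, NNReal.coe_one, one_mul]).continuousOn

theorem tendsto_dist_div (hc : IsGeodesicRay c) (hc' : IsGeodesicRay c') (h0 : c 0 = c' 0)
    {θ : ℝ} (hθ : HasTitsAngle (c 0) c c' θ) :
    Tendsto (fun t => dist (c t) (c' t) / t) atTop (𝓝 (2 * Real.sin (θ / 2))) := by
  have hsin : Tendsto (fun t => 2 * Real.sin (compAngle (c 0) (c t) (c' t) / 2)) atTop
      (𝓝 (2 * Real.sin (θ / 2))) :=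
    ((Real.continuous_sin.tendsto _).comp (hθ.div_const 2)).const_mul 2
  refine hsin.congr' ?_
  filter_upwards [eventually_gt_atTop 0] with t ht
  rw [dist_eq_mul_sin_half_compAngle (hc.dist_zero_left ht.le) (h0 ▸ hc'.dist_zero_left ht.le),
    mul_div_cancel_left₀ _ ht.ne']

theorem convexOn_dist_sq_sub_sq (hX : BruhatTitsInequality X) (hc : IsGeodesicRay c) (x : X) :
    ConvexOn ℝ (Ici 0) fun s => dist x (c s) ^ 2 - s ^ 2 := by
  have hcont := hc.continuousOn
  refine convexOn_of_continuousOn_of_midpoint_le (convex_Ici 0) (by fun_prop)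
    fun u hu v hv => ?_
  have hm : midpoint ℝ u v ∈ Ici (0 : ℝ) := (convex_Ici 0).midpoint_mem hu hv
  have hu_mid : dist (c u) (c (midpoint ℝ u v)) = dist (c u) (c v) / 2 := by
    rw [hc u hu _ hm, hc u hu v hv, ← Real.dist_eq, ← Real.dist_eq, dist_left_midpoint,
      Real.norm_two, inv_mul_eq_div]
  have hv_mid : dist (c v) (c (midpoint ℝ u v)) = dist (c u) (c v) / 2 := by
    rw [hc v hv _ hm, hc u hu v hv, ← Real.dist_eq, ← Real.dist_eq, dist_right_midpoint,
      Real.norm_two, inv_mul_eq_div]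
  have hCN := hX x _ _ _ hu_mid hv_mid
  rw [hc u hu v hv, sq_abs] at hCN
  have hmid : midpoint ℝ u v = (u + v) / 2 := by
    rw [midpoint_eq_smul_add, smul_eq_mul, invOf_eq_inv, div_eq_inv_mul]
  rw [hmid] at hCN ⊢
  linarith

/-- Monotonicity of comparison angles: by the law of cosines,
`(dist x (c s) ^ 2 - (dist x (c 0) - s) ^ 2) / s = 2 * dist x (c 0) * (1 - cos θ)`, where `θ` is
the comparison angle at `c 0` between `x` and `c s`. -/
theorem mul_dist_sq_sub_sq_le (hX : BruhatTitsInequality X) (hc : IsGeodesicRay c) (x : X)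
    {s t : ℝ} (hs : 0 ≤ s) (hst : s ≤ t) :
    t * (dist x (c s) ^ 2 - (dist x (c 0) - s) ^ 2) ≤
      s * (dist x (c t) ^ 2 - (dist x (c 0) - t) ^ 2) := by
  rcases hs.eq_or_lt with rfl | hs
  · simp
  rcases hst.eq_or_lt with rfl | hst
  · rfl
  have h := (hc.convexOn_dist_sq_sub_sq hX x).secant_mono_aux1 self_mem_Ici
    (hs.trans hst).le hs hst
  linarith

theorem mul_mul_dist_sq_le (hX : BruhatTitsInequality X) (hc : IsGeodesicRay c)
    (hc' : IsGeodesicRay c') (h0 : c 0 = c' 0) {r s t : ℝ} (hr : 0 ≤ r) (hrs : r ≤ s)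
    (hrt : r ≤ t) :
    s * t * dist (c r) (c' r) ^ 2 ≤ r ^ 2 * (dist (c s) (c' t) ^ 2 - (s - t) ^ 2) := by
  have hfirst := hc.mul_dist_sq_sub_sq_le hX (c' t) hr hrs
  have hsecond := hc'.mul_dist_sq_sub_sq_le hX (c r) hr hrt
  rw [h0, dist_comm _ (c' 0), hc'.dist_zero_left (hr.trans hrt), dist_comm _ (c r),
    dist_comm _ (c s)] at hfirst
  rw [← h0, dist_comm _ (c 0), hc.dist_zero_left hr, sub_self] at hsecond
  linarith [mul_le_mul_of_nonneg_left hsecond (hr.trans hrs), mul_le_mul_of_nonneg_left hfirst hr]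

theorem dist_le_dist (hX : BruhatTitsInequality X) (hc : IsGeodesicRay c)
    (hc' : IsGeodesicRay c') (h0 : c 0 = c' 0) {r s t : ℝ} (hr : 0 ≤ r) (hrs : r ≤ s)
    (hrt : r ≤ t) : dist (c r) (c' r) ≤ dist (c s) (c' t) := by
  rcases hr.eq_or_lt with rfl | hr
  · rw [h0, dist_self]
    exact dist_nonneg
  refine (sq_le_sq₀ dist_nonneg dist_nonneg).1 ?_
  refine le_of_mul_le_mul_left ?_ (pow_pos hr 2)
  calc r ^ 2 * dist (c r) (c' r) ^ 2 ≤ s * t * dist (c r) (c' r) ^ 2 := by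
        rw [sq r]
        exact mul_le_mul_of_nonneg_right (mul_le_mul hrs hrt hr.le (hr.le.trans hrs)) (sq_nonneg _)
    _ ≤ r ^ 2 * (dist (c s) (c' t) ^ 2 - (s - t) ^ 2) :=
        hc.mul_mul_dist_sq_le hX hc' h0 hr.le hrs hrt
    _ ≤ r ^ 2 * dist (c s) (c' t) ^ 2 := by
        gcongr
        exact sub_le_self _ (sq_nonneg _)

theorem mul_two_mul_sin_half_le_of_tendsto (hX : BruhatTitsInequality X) (hc : IsGeodesicRay c)
    (hc' : IsGeodesicRay c') (h0 : c 0 = c' 0) {θ : ℝ} (hθ : HasTitsAngle (c 0) c c' θ)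
    {ι : Type*} {l : Filter ι} [l.NeBot] {r s t D : ι → ℝ} (hr : Tendsto r l atTop)
    {a d : ℝ} (ha : 0 < a) (hs : ∀ᶠ i in l, a * r i ≤ s i) (ht : ∀ᶠ i in l, a * r i ≤ t i)
    (hdist : ∀ᶠ i in l, dist (c (s i)) (c' (t i)) ≤ D i)
    (hD : Tendsto (fun i => D i / r i) l (𝓝 d)) :
    a * (2 * Real.sin (θ / 2)) ≤ d := by
  have hspeed := ((hc.tendsto_dist_div hc' h0 hθ).comp (hr.const_mul_atTop ha)).const_mul a
  refine le_of_tendsto_of_tendsto hspeed hD ?_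
  filter_upwards [hr.eventually_gt_atTop 0, hs, ht, hdist] with i hri hsi hti hi
  calc a * (dist (c (a * r i)) (c' (a * r i)) / (a * r i))
      = dist (c (a * r i)) (c' (a * r i)) / r i := by field_simp
    _ ≤ D i / r i := by
        gcongr
        exact (hc.dist_le_dist hX hc' h0 (by positivity) hsi hti).trans hi

end IsGeodesicRay

/-- The points `x i` Tits converge along `l` to the ideal point of the ray `c` from `q`: their
distance to `c` is negligible compared with their distance to `q`. Divergence of `dist (x i) q` is
not part of the definition. -/
def TitsConvergesTo {X ι : Type*} [MetricSpace X] (l : Filter ι) (x : ι → X) (q : X)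
    (c : ℝ → X) : Prop :=
  Tendsto (fun i => infDist (x i) (c '' Ici 0) / dist (x i) q) l (𝓝 0)

theorem TitsConvergesTo.exists_isLittleO_dist {X ι : Type*} [MetricSpace X] {l : Filter ι}
    {x : ι → X} {q : X} {c : ℝ → X} (hx : TitsConvergesTo l x q c)
    (hpos : ∀ᶠ i in l, 0 < dist (x i) q) {r : ι → ℝ} (hr : Tendsto r l atTop)
    (hO : (fun i => dist (x i) q) =O[l] r) :
    ∃ s : ι → ℝ, (∀ i, 0 ≤ s i) ∧ (fun i => dist (x i) (c (s i))) =o[l] r := by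
  have hinf : (fun i => infDist (x i) (c '' Ici 0)) =o[l] r :=
    (isLittleO_of_tendsto' (hpos.mono fun i hi h => absurd h hi.ne') hx).trans_isBigO hO
  have hone : (fun _ => (1 : ℝ)) =o[l] r :=
    (isLittleO_const_id_atTop _).comp_tendsto hr
  have hnear (i : ι) : ∃ s, 0 ≤ s ∧ dist (x i) (c s) < infDist (x i) (c '' Ici 0) + 1 := by
    simpa using (infDist_lt_iff (nonempty_Ici.image c)).1 (lt_add_one (infDist (x i) (c '' Ici 0)))
  choose s hs0 hs using hnear
  refine ⟨s, hs0, (IsBigO.of_bound' (.of_forall fun i => ?_)).trans_isLittleO (hinf.add hone)⟩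
  rw [Real.norm_of_nonneg dist_nonneg]
  exact (hs i).le.trans (le_abs_self _)

/-- The two inequalities defining an `(L, A)`-quasi-isometric embedding, that is, an
`(L, A)`-quasi-isometry without coarse surjectivity. -/
def IsQuasiIsometricEmbedding {X₁ X₂ : Type*} [MetricSpace X₁] [MetricSpace X₂] (L A : ℝ)
    (f : X₁ → X₂) : Prop :=
  ∀ x y : X₁, dist x y / L - A ≤ dist (f x) (f y) ∧ dist (f x) (f y) ≤ L * dist x y + A

namespace IsQuasiIsometricEmbedding

variable {X₁ X₂ : Type*} [MetricSpace X₁] [MetricSpace X₂] {L A : ℝ} {f : X₁ → X₂}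

theorem sub_le_dist (hf : IsQuasiIsometricEmbedding L A f) (p x : X₁) (q : X₂) :
    dist p x / L - (A + dist (f p) q) ≤ dist (f x) q := by
  linarith [(hf p x).1, dist_triangle_right (f p) (f x) q]

theorem dist_le_add (hf : IsQuasiIsometricEmbedding L A f) (p x : X₁) (q : X₂) :
    dist (f x) q ≤ L * dist p x + (A + dist (f p) q) := by
  linarith [(hf p x).2, dist_triangle_left (f x) q (f p)]

variable {ι : Type*} {l : Filter ι} {r : ι → ℝ} {γ : ℝ → X₁} {q : X₂}

theorem isBigO_dist_ray (hf : IsQuasiIsometricEmbedding L A f) (hγ : IsGeodesicRay γ)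
    (hr : Tendsto r l atTop) : (fun i => dist (f (γ (r i))) q) =O[l] r := by
  have hconst : (fun _ => A + dist (f (γ 0)) q) =o[l] r :=
    (isLittleO_const_id_atTop _).comp_tendsto hr
  refine IsBigO.trans (.of_bound' ?_) (((isBigO_refl r l).const_mul_left L).add hconst.isBigO)
  filter_upwards [hr.eventually_ge_atTop 0] with i hi
  have h := hf.dist_le_add (γ 0) (γ (r i)) q
  rw [hγ.dist_zero_left hi] at h
  rw [Real.norm_of_nonneg dist_nonneg]
  exact h.trans (le_abs_self _)

theorem eventually_mul_le_dist_ray (hf : IsQuasiIsometricEmbedding L A f) (hγ : IsGeodesicRay γ)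
    (hr : Tendsto r l atTop) {u : ι → ℝ} (hu : u =o[l] r) {a : ℝ} (ha : a < 1 / L) :
    ∀ᶠ i in l, a * r i ≤ dist (f (γ (r i))) q - u i := by
  have hconst : (fun _ => A + dist (f (γ 0)) q) =o[l] r :=
    (isLittleO_const_id_atTop _).comp_tendsto hr
  filter_upwards [(hu.add hconst).bound (sub_pos.2 ha), hr.eventually_ge_atTop 0] with i hi hri
  have h := hf.sub_le_dist (γ 0) (γ (r i)) q
  rw [hγ.dist_zero_left hri, div_eq_mul_one_div] at h
  rw [Real.norm_of_nonneg hri] at hi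
  linarith [(Real.le_norm_self _).trans hi]

theorem exists_isLittleO_dist_ray (hf : IsQuasiIsometricEmbedding L A f) (hL : 0 < L)
    (hγ : IsGeodesicRay γ) (hr : Tendsto r l atTop) {c : ℝ → X₂} (hc : IsGeodesicRay c)
    (hconv : TitsConvergesTo l (fun i => f (γ (r i))) (c 0) c) :
    ∃ s : ι → ℝ, (∀ a < 1 / L, ∀ᶠ i in l, a * r i ≤ s i) ∧
      (fun i => dist (f (γ (r i))) (c (s i))) =o[l] r := by
  have hpos : ∀ᶠ i in l, 0 < dist (f (γ (r i))) (c 0) := by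
    have hhalf : 1 / (2 * L) < 1 / L := one_div_lt_one_div_of_lt hL (by linarith)
    filter_upwards [hf.eventually_mul_le_dist_ray (q := c 0) hγ hr (isLittleO_zero _ _) hhalf,
      hr.eventually_gt_atTop 0] with i hi hri
    rw [sub_zero] at hi
    exact lt_of_lt_of_le (by positivity) hi
  obtain ⟨s, hs0, hs⟩ := hconv.exists_isLittleO_dist hpos hr (hf.isBigO_dist_ray hγ hr)
  refine ⟨s, fun a ha => ?_, hs⟩
  filter_upwards [hf.eventually_mul_le_dist_ray (q := c 0) hγ hr hs ha] with i hi
  have hsi : dist (c (s i)) (c 0) = s i := by rw [dist_comm, hc.dist_zero_left (hs0 i)]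
  linarith [dist_triangle (f (γ (r i))) (c (s i)) (c 0)]

theorem sin_half_titsAngle_le (hX₂ : BruhatTitsInequality X₂)
    (hf : IsQuasiIsometricEmbedding L A f) (hL : 0 < L) [l.NeBot] (hr : Tendsto r l atTop)
    {γ₁ γ₂ : ℝ → X₁} (hγ₁ : IsGeodesicRay γ₁) (hγ₂ : IsGeodesicRay γ₂) (hγ : γ₁ 0 = γ₂ 0)
    {c₁ c₂ : ℝ → X₂} (hc₁ : IsGeodesicRay c₁) (hc₂ : IsGeodesicRay c₂) (hc : c₁ 0 = c₂ 0)
    (hconv₁ : TitsConvergesTo l (fun i => f (γ₁ (r i))) (c₁ 0) c₁)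
    (hconv₂ : TitsConvergesTo l (fun i => f (γ₂ (r i))) (c₂ 0) c₂)
    {α β : ℝ} (hα : HasTitsAngle (γ₁ 0) γ₁ γ₂ α) (hβ : HasTitsAngle (c₁ 0) c₁ c₂ β) :
    Real.sin (β / 2) ≤ L ^ 2 * Real.sin (α / 2) := by
  obtain ⟨s, hs, hos⟩ := hf.exists_isLittleO_dist_ray hL hγ₁ hr hc₁ hconv₁
  obtain ⟨t, ht, hot⟩ := hf.exists_isLittleO_dist_ray hL hγ₂ hr hc₂ hconv₂
  have hA : (fun _ => A) =o[l] r :=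
    (isLittleO_const_id_atTop _).comp_tendsto hr
  set err : ι → ℝ := fun i =>
    A + (dist (f (γ₁ (r i))) (c₁ (s i)) + dist (f (γ₂ (r i))) (c₂ (t i)))
  have hdist (i : ι) :
      dist (c₁ (s i)) (c₂ (t i)) ≤ L * dist (γ₁ (r i)) (γ₂ (r i)) + err i := by
    have h := dist_triangle4 (c₁ (s i)) (f (γ₁ (r i))) (f (γ₂ (r i))) (c₂ (t i))
    rw [dist_comm _ (f (γ₁ (r i)))] at h
    simp only [err]
    linarith [(hf (γ₁ (r i)) (γ₂ (r i))).2]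
  have hlim : Tendsto (fun i => (L * dist (γ₁ (r i)) (γ₂ (r i)) + err i) / r i) l
      (𝓝 (L * (2 * Real.sin (α / 2)))) := by
    simpa only [err, Function.comp_apply, add_div, mul_div_assoc, add_zero] using
      (((hγ₁.tendsto_dist_div hγ₂ hγ hα).comp hr).const_mul L).add
        (hA.add (hos.add hot)).tendsto_div_nhds_zero
  have hslope : ∀ᶠ a in 𝓝[<] (1 / L), a * (2 * Real.sin (β / 2)) ≤ L * (2 * Real.sin (α / 2)) := by
    filter_upwards [Ioo_mem_nhdsLT (one_div_pos.2 hL)] with a ⟨ha0, haL⟩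
    exact hc₁.mul_two_mul_sin_half_le_of_tendsto hX₂ hc₂ hc hβ hr ha0 (hs a haL) (ht a haL)
      (.of_forall hdist) hlim
  have hle : 1 / L * (2 * Real.sin (β / 2)) ≤ L * (2 * Real.sin (α / 2)) :=
    le_of_tendsto ((tendsto_id.mono_left nhdsWithin_le_nhds).mul_const _) hslope
  rw [one_div_mul_eq_div, div_le_iff₀ hL] at hle
  linarith

end IsQuasiIsometricEmbedding

theorem sin_le_two_mul_sin_half {β : ℝ} (h0 : 0 ≤ β) (hπ : β ≤ π) :
    Real.sin β ≤ 2 * Real.sin (β / 2) := by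
  have hsin : 0 ≤ Real.sin (β / 2) := Real.sin_nonneg_of_nonneg_of_le_pi (by linarith) (by linarith)
  calc Real.sin β = 2 * Real.sin (β / 2) * Real.cos (β / 2) := by
        rw [← Real.sin_two_mul, mul_div_cancel₀ _ two_ne_zero]
    _ ≤ 2 * Real.sin (β / 2) := mul_le_of_le_one_right (by positivity) (Real.cos_le_one _)

theorem le_pi_mul_sin_half {β : ℝ} (h0 : 0 ≤ β) (hπ : β ≤ π) : β ≤ π * Real.sin (β / 2) := by
  have h := Real.mul_le_sin (x := β / 2) (by linarith) (by linarith)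
  calc β = π * (2 / π * (β / 2)) := by field_simp
    _ ≤ π * Real.sin (β / 2) := by gcongr

theorem pi_div_two_le_of_forall_le_mul_sin {lam : ℝ} (hlam : 0 ≤ lam)
    (h : ∀ t, 0 < t → t < π / 2 → t ≤ lam * Real.sin t) : π / 2 ≤ lam := by
  refine le_of_forall_lt_imp_le_of_dense fun t ht => ?_
  rcases le_or_gt t 0 with ht0 | ht0
  · exact ht0.trans hlam
  · exact (h t ht0 ht).trans (mul_le_of_le_one_right hlam (Real.sin_le_one t))

theorem le_mul_of_two_mul_sin_half_le {β y lam μ : ℝ} (h0 : 0 ≤ β) (hπ : β ≤ π)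
    (hy : 2 * Real.sin (β / 2) ≤ y) (hyμ : y ≤ μ) (hlam : 0 ≤ lam)
    (h : ∀ t, 0 < t → t < π / 2 → Real.sin t ≤ μ → t ≤ lam * Real.sin t) :
    β ≤ lam * y := by
  have hsin : Real.sin β ≤ y := (sin_le_two_mul_sin_half h0 hπ).trans hy
  have hβy : β ≤ π / 2 * y := by
    linarith [le_pi_mul_sin_half h0 hπ, mul_le_mul_of_nonneg_left hy Real.pi_pos.le]
  rcases h0.eq_or_lt with rfl | hβ0
  · refine mul_nonneg hlam ?_
    simpa using hy
  rcases lt_or_ge β (π / 2) with hβ | hβ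
  · exact (h β hβ0 hβ (hsin.trans hyμ)).trans (by gcongr)
  · -- Here `1 ≤ y ≤ μ`, so the condition `sin t ≤ μ` is void and forces `π / 2 ≤ lam`.
    have hy1 : 1 ≤ y := by
      refine le_of_mul_le_mul_left ?_ Real.pi_div_two_pos
      linarith
    have hlamπ : π / 2 ≤ lam := pi_div_two_le_of_forall_le_mul_sin hlam fun t ht0 ht =>
      h t ht0 ht ((Real.sin_le_one t).trans (hy1.trans hyμ))
    exact hβy.trans (by gcongr)

theorem stmt_18_general {X₁ X₂ ι : Type*} [MetricSpace X₁] [MetricSpace X₂]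
    (hX₂ : BruhatTitsInequality X₂) {L A : ℝ} (hL : 0 < L) {f : X₁ → X₂}
    (hf : IsQuasiIsometricEmbedding L A f) {l : Filter ι} [l.NeBot] {r : ι → ℝ}
    (hr : Tendsto r l atTop) {p : X₁} {q : X₂} {γ₁ γ₂ : ℝ → X₁} {c₁ c₂ : ℝ → X₂}
    (hγ₁ : IsGeodesicRay γ₁) (hγ₂ : IsGeodesicRay γ₂) (hγ₁0 : γ₁ 0 = p) (hγ₂0 : γ₂ 0 = p)
    (hc₁ : IsGeodesicRay c₁) (hc₂ : IsGeodesicRay c₂) (hc₁0 : c₁ 0 = q) (hc₂0 : c₂ 0 = q)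
    (hconv₁ : TitsConvergesTo l (fun i => f (γ₁ (r i))) q c₁)
    (hconv₂ : TitsConvergesTo l (fun i => f (γ₂ (r i))) q c₂)
    {α β : ℝ} (hα : HasTitsAngle p γ₁ γ₂ α) (hβ : HasTitsAngle q c₁ c₂ β) :
    Real.sin β ≤ 2 * L ^ 2 * Real.sin (α / 2) ∧
    ∀ lam μ : ℝ, 0 ≤ lam →
      (∀ t : ℝ, 0 < t → t < π / 2 → Real.sin t ≤ μ → t ≤ lam * Real.sin t) →
      α ≤ μ / L ^ 2 → β ≤ lam * L ^ 2 * α := by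
  subst hγ₁0 hc₁0
  have hhalf : 2 * Real.sin (β / 2) ≤ 2 * L ^ 2 * Real.sin (α / 2) := by
    linarith [hf.sin_half_titsAngle_le hX₂ hL hr hγ₁ hγ₂ hγ₂0.symm hc₁ hc₂ hc₂0.symm hconv₁
      (hc₂0 ▸ hconv₂) hα hβ]
  refine ⟨(sin_le_two_mul_sin_half hβ.nonneg hβ.le_pi).trans hhalf, fun lam μ hlam h hαμ => ?_⟩
  have hsinα : Real.sin (α / 2) ≤ α / 2 := Real.sin_le (by linarith [hα.nonneg])
  have hchord : 2 * Real.sin (β / 2) ≤ L ^ 2 * α := by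
    linarith [mul_le_mul_of_nonneg_left hsinα (sq_nonneg L)]
  rw [mul_assoc]
  exact le_mul_of_two_mul_sin_half_le hβ.nonneg hβ.le_pi hchord
    ((le_div_iff₀' (by positivity)).1 hαμ) hlam h

/-- Quantitative estimate for the map Tits-induced on the boundary by an
`(L,A)`-quasi-isometry: with `α = d_T(ξ,η)` and `β = d_T(h(ξ),h(η))` (realised as
limits of comparison angles along representing rays), one has
`sin β ≤ 2 L² sin (α/2)`; in particular, if `α ≤ μ/L²` where `μ` is chosen so that
`t ≤ λ sin t` whenever `0 < t < π/2` and `sin t ≤ μ`, then `β ≤ λ L² α`. -/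
theorem stmt_18 {X₁ X₂ : Type*} [MetricSpace X₁] [MetricSpace X₂]
    [CompleteSpace X₁] [CompleteSpace X₂] (hX₁ : IsCAT0 X₁) (hX₂ : IsCAT0 X₂)
    (L A : ℝ) (hL : 1 ≤ L) (hA : 0 ≤ A) (f : X₁ → X₂)
    (hqi : ∀ x y : X₁, dist x y / L - A ≤ dist (f x) (f y) ∧
      dist (f x) (f y) ≤ L * dist x y + A)
    (hcobdd : ∀ y : X₂, ∃ x : X₁, dist (f x) y ≤ A)
    (p : X₁) (q : X₂) (γ₁ γ₂ : ℝ → X₁) (c₁ c₂ : ℝ → X₂)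
    (hγ₁ : IsGeodesicRay γ₁) (hγ₂ : IsGeodesicRay γ₂)
    (hγ₁0 : γ₁ 0 = p) (hγ₂0 : γ₂ 0 = p)
    (hc₁ : IsGeodesicRay c₁) (hc₂ : IsGeodesicRay c₂)
    (hc₁0 : c₁ 0 = q) (hc₂0 : c₂ 0 = q)
    -- `f(γ_{pξ}(i))` Tits converges to `h(ξ)` (represented by the ray `c₁`):
    (hconv₁ : Filter.Tendsto
      (fun i : ℕ => Metric.infDist (f (γ₁ i)) (c₁ '' Set.Ici (0:ℝ)) / dist (f (γ₁ i)) q)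
      Filter.atTop (nhds 0))
    (hconv₂ : Filter.Tendsto
      (fun i : ℕ => Metric.infDist (f (γ₂ i)) (c₂ '' Set.Ici (0:ℝ)) / dist (f (γ₂ i)) q)
      Filter.atTop (nhds 0))
    (α β : ℝ)
    (hα : Filter.Tendsto (fun t => compAngle p (γ₁ t) (γ₂ t)) Filter.atTop (nhds α))
    (hβ : Filter.Tendsto (fun t => compAngle q (c₁ t) (c₂ t)) Filter.atTop (nhds β)) :
    (β ≤ Real.pi → Real.sin β ≤ 2 * L ^ 2 * Real.sin (α / 2)) ∧
    (∀ lam μ : ℝ, 1 < lam → 0 < μ →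
      (∀ t : ℝ, 0 < t → t < Real.pi / 2 → Real.sin t ≤ μ → t ≤ lam * Real.sin t) →
      α ≤ μ / L ^ 2 → β ≤ lam * L ^ 2 * α) := by
  have h := stmt_18_general hX₂.2 (zero_lt_one.trans_le hL) hqi tendsto_natCast_atTop_atTop
    hγ₁ hγ₂ hγ₁0 hγ₂0 hc₁ hc₂ hc₁0 hc₂0 hconv₁ hconv₂ hα hβ
  exact ⟨fun _ => h.1, fun lam μ hlam _ => h.2 lam μ (zero_le_one.trans hlam.le)⟩
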